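/- arXiv:2402.18053 — 2 statements merged into one kernel-verified Lean document; each statement's English description precedes it below -/
import Mathlib

section
/- Let k ≥ 4 and m ≥ 1, and let G be an edge-colored graph on n ≥ km vertices. If e(G) + c(G) ≥ ((n - k(m-1)) choose 2) + t_{n-k(m-1), k-2} + 2 + k(m-1)(2n-1) - k^2 (m-1)^2, then G contains m pairwise vertex-disjoint rainbow copies of K_k. -/
/-- `t_{n,r}`: the number of edges of the Turán graph, i.e. the complete `r`-partite
graph on `n` vertices with part sizes as balanced as possible. -/
noncomputable def turanEdges (n r : ℕ) : ℕ := Nat.card (SimpleGraph.turanGraph n r).edgeSet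

/-- `S` is the vertex set of a rainbow clique of `G`: the vertices of `S` are pairwise
adjacent and the coloring `C` is injective on the edges spanned by `S`. -/
def IsRainbowClique {V : Type*} (G : SimpleGraph V) (C : Sym2 V → ℕ) (S : Finset V) : Prop :=
  (∀ u ∈ S, ∀ v ∈ S, u ≠ v → G.Adj u v) ∧
  (∀ u ∈ S, ∀ v ∈ S, ∀ x ∈ S, ∀ y ∈ S, u ≠ v → x ≠ y →
    C s(u, v) = C s(x, y) → s(u, v) = s(x, y))

/-!
Put `r = k - 2`. For a vertex `v` call a color saturated if all its edges contain `v`; deleting `v`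
lowers `e + c` by the degree plus the number of saturated colors. If this loss is small for some
`v`, it is at most the decrease of `C(n, 2) + t_{n,r}`, so one may delete `v` and induct, down to
`r + 2` vertices, where the bound forces a complete graph with all colors distinct.

Otherwise choose for every vertex one neighbor per saturated color. Each vertex then misses at most
`p = ⌊(n - 1) / r⌋` of the `n` vertices as representatives, so a greedy choice gives a sequence of
`r + 1` vertices in which each later vertex represents a color of each earlier one. Taking at every
step the vertex with the fewest saturated neighbors outside its representatives keeps the total
number of these surplus neighbors low. Counting non-representatives, non-neighbors and surplus
neighbors then yields a further vertex that is adjacent to the whole sequence, represents a color of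
all but at most one member, and is a surplus neighbor of none of the first `r`; together with the
sequence it is a rainbow `K_{r+2}`.

For `m` cliques, remove them one at a time: passing from `U` to `W ⊆ U` lowers `e + c` by at most
`2 (C(|U|, 2) - C(|W|, 2))`.
-/

open Finset

section Turan

theorem choose_two_succ (n : ℕ) : (n + 1).choose 2 = n.choose 2 + n := by
  rw [Nat.choose_succ_succ' n 1, Nat.choose_one_right, add_comm]

theorem two_mul_choose_two_add (N a : ℕ) :
    2 * (N + a).choose 2 = 2 * N.choose 2 + (a * (2 * (N + a) - 1) - a ^ 2) := by
  cases a with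
  | zero => simp
  | succ b =>
    rw [sq, ← Nat.mul_sub, show 2 * (N + (b + 1)) - 1 - (b + 1) = 2 * N + b by omega]
    qify
    simp only [Nat.cast_choose_two]
    push_cast
    ring

theorem turanEdges_eq_card_edgeFinset (n r : ℕ) :
    turanEdges n r = #(SimpleGraph.turanGraph n r).edgeFinset := by
  rw [turanEdges, Nat.card_eq_fintype_card, SimpleGraph.edgeFinset_card]

theorem turanEdges_eq_choose_two {n r : ℕ} (h : r = 0 ∨ n ≤ r) : turanEdges n r = n.choose 2 := by
  simp only [turanEdges, SimpleGraph.turanGraph_eq_top.2 h, Nat.card_eq_fintype_card,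
    ← SimpleGraph.edgeFinset_card, SimpleGraph.card_edgeFinset_top_eq_card_choose_two,
    Fintype.card_fin]

theorem turanEdges_add_self (n r : ℕ) :
    turanEdges (n + r) r = turanEdges n r + n * (r - 1) + r.choose 2 := by
  simp only [turanEdges_eq_card_edgeFinset, SimpleGraph.card_edgeFinset_turanGraph_add]

theorem turanEdges_succ_add_div (n r : ℕ) : turanEdges (n + 1) r + n / r = turanEdges n r + n := by
  rcases Nat.eq_zero_or_pos r with rfl | hr
  · simp only [turanEdges_eq_choose_two (Or.inl rfl), choose_two_succ, Nat.div_zero, add_zero]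
  induction n using Nat.strong_induction_on with
  | _ n ih =>
    rcases lt_or_ge n r with h | h
    · rw [turanEdges_eq_choose_two (Or.inr h), turanEdges_eq_choose_two (Or.inr h.le),
        Nat.div_eq_of_lt h, choose_two_succ, add_zero]
    · obtain ⟨m, rfl⟩ := Nat.exists_eq_add_of_le' h
      have hm := ih m (by omega)
      rw [add_right_comm, turanEdges_add_self, turanEdges_add_self, Nat.add_div_right _ hr,
        add_one_mul m]
      omega

theorem turanEdges_add_two_add_two {r : ℕ} (hr : 2 ≤ r) :
    turanEdges (r + 2) r + 2 = (r + 2).choose 2 := by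
  have h₀ : turanEdges r r = r.choose 2 := turanEdges_eq_choose_two (Or.inr le_rfl)
  have h₁ : turanEdges (r + 1) r + 1 = turanEdges r r + r := by
    simpa only [Nat.div_self (by omega : 0 < r)] using turanEdges_succ_add_div r r
  have h₂ : turanEdges (r + 2) r + 1 = turanEdges (r + 1) r + (r + 1) := by
    have hdiv : (r + 1) / r = 1 := Nat.div_eq_of_lt_le (by omega) (by omega)
    simpa only [hdiv] using turanEdges_succ_add_div (r + 1) r
  rw [choose_two_succ, choose_two_succ]
  omega

theorem turanEdges_add_choose_two_le {N n : ℕ} (r : ℕ) (h : N ≤ n) :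
    turanEdges n r + N.choose 2 ≤ turanEdges N r + n.choose 2 := by
  induction n, h using Nat.le_induction with
  | base => rfl
  | succ n _ ih =>
    have hsucc : turanEdges (n + 1) r ≤ turanEdges n r + n :=
      (Nat.le_add_right _ _).trans_eq (turanEdges_succ_add_div n r)
    rw [choose_two_succ]
    omega

end Turan

section TransitiveList

variable {V : Type*} [DecidableEq V]

-- `g` is at most the average `F' / n`; after multiplication by `n` the claim is
-- `0 ≤ (n - r * p) * (F' - n * g)` up to the other hypotheses.
theorem add_mul_add_le_succ_mul {n p r g S F F' : ℕ} (hn : r * p < n)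
    (hS : n * S ≤ r * F') (hg : n * g ≤ F') (hF : p * g + F' ≤ F) :
    (n + p) * (g + S) ≤ (r + 1) * F := by
  obtain ⟨d, rfl⟩ := Nat.exists_eq_add_of_lt hn
  refine le_of_mul_le_mul_left ?_ (by omega : 0 < r * p + d + 1)
  nlinarith [Nat.mul_le_mul_left (r * p + d + 1 + p) hS, Nat.mul_le_mul_left (d + 1) hg,
    Nat.mul_le_mul_left ((r * p + d + 1) * (r + 1)) hF]

theorem exists_pairwise_list_sum_le (D : V → Finset V) (f : V → ℕ) (p r : ℕ) {U : Finset V}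
    (hcard : r * p < #U) (hD : ∀ v ∈ U, #(U \ D v) ≤ p) :
    ∃ l : List V, ∃ x ∈ U, l.length = r ∧ (∀ v ∈ l, v ∈ U) ∧
      (l ++ [x]).Pairwise (fun a b ↦ b ∈ D a) ∧ #U * (l.map f).sum ≤ r * ∑ u ∈ U, f u := by
  induction r generalizing U with
  | zero =>
    obtain ⟨x, hx⟩ : U.Nonempty := card_pos.1 (by omega)
    exact ⟨[], x, hx, by simp⟩
  | succ r ih =>
    rw [add_one_mul] at hcard
    obtain ⟨v, hvU, hmin⟩ := exists_min_image U f (card_pos.1 (by omega))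
    obtain ⟨U', hU', hU'card⟩ : ∃ U' ⊆ U ∩ D v, #U' = #U - p := by
      refine exists_subset_card_eq ?_
      have := hD v hvU
      have := card_inter_add_card_sdiff U (D v)
      omega
    have hU'U : U' ⊆ U := hU'.trans inter_subset_left
    have hU'D : U' ⊆ D v := hU'.trans inter_subset_right
    obtain ⟨l, x, hx, hlen, hlU', hpair, hsum⟩ := ih (U := U') (by omega)
      fun u hu ↦ (card_le_card (sdiff_subset_sdiff hU'U le_rfl)).trans (hD u (hU'U hu))
    refine ⟨v :: l, x, hU'U hx, by simp [hlen], ?_, ?_, ?_⟩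
    · simpa [hvU] using fun u hu ↦ hU'U (hlU' u hu)
    · refine List.pairwise_cons.2 ⟨fun u hu ↦ hU'D ?_, hpair⟩
      rcases List.mem_append.1 hu with hul | hux
      · exact hlU' u hul
      · exact List.mem_singleton.1 hux ▸ hx
    · have hmin' : #U' * f v ≤ ∑ u ∈ U', f u :=
        card_nsmul_le_sum _ _ _ fun u hu ↦ hmin u (hU'U hu)
      have hsplit : p * f v + ∑ u ∈ U', f u ≤ ∑ u ∈ U, f u := by
        rw [← sum_sdiff hU'U]
        gcongr
        have hsdiff : #(U \ U') = p := by rw [card_sdiff_of_subset hU'U]; omega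
        rw [← hsdiff]
        exact card_nsmul_le_sum _ _ _ fun u hu ↦ hmin u (mem_sdiff.1 hu).1
      rw [List.map_cons, List.sum_cons, show #U = #U' + p by omega]
      exact add_mul_add_le_succ_mul (by omega) hsum hmin' hsplit

end TransitiveList

section EdgesAndColors

variable {V κ : Type*} (G : SimpleGraph V) [DecidableRel G.Adj]

/-- The edges of `G` with both ends in `U`, that is, the edges of the induced subgraph `G[U]`
seen as unordered pairs of vertices of `G`. -/
def edgesIn (U : Finset V) : Finset (Sym2 V) := {e ∈ U.sym2 | e ∈ G.edgeSet}

/-- The neighbors of `v` in `G` that lie in `U`; their number is the degree of `v` in `G[U]`. -/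
def neighborsIn (U : Finset V) (v : V) : Finset V := {u ∈ U | G.Adj v u}

variable {G} {U W : Finset V} {v x y : V}

theorem mem_edgesIn : s(x, y) ∈ edgesIn G U ↔ (x ∈ U ∧ y ∈ U) ∧ G.Adj x y := by
  rw [edgesIn, mem_filter, mk_mem_sym2_iff, SimpleGraph.mem_edgeSet]

theorem mem_neighborsIn : x ∈ neighborsIn G U v ↔ x ∈ U ∧ G.Adj v x := mem_filter

theorem edgesIn_mono (h : W ⊆ U) : edgesIn G W ⊆ edgesIn G U :=
  filter_subset_filter _ (sym2_mono h)

theorem edgesIn_insert [DecidableEq V] :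
    edgesIn G (insert v U) = edgesIn G U ∪ (neighborsIn G U v).image (s(v, ·)) := by
  ext ⟨x, y⟩
  simp only [mem_union, mem_edgesIn, mem_image, mem_neighborsIn, mem_insert, Sym2.eq_iff]
  constructor
  · rintro ⟨⟨rfl | hx, rfl | hy⟩, hxy⟩
    · exact (G.irrefl hxy).elim
    · exact Or.inr ⟨y, ⟨hy, hxy⟩, Or.inl ⟨rfl, rfl⟩⟩
    · exact Or.inr ⟨x, ⟨hx, hxy.symm⟩, Or.inr ⟨rfl, rfl⟩⟩
    · exact Or.inl ⟨⟨hx, hy⟩, hxy⟩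
  · rintro (⟨⟨hx, hy⟩, hxy⟩ | ⟨u, ⟨hu, hvu⟩, ⟨rfl, rfl⟩ | ⟨rfl, rfl⟩⟩)
    · exact ⟨⟨Or.inr hx, Or.inr hy⟩, hxy⟩
    · exact ⟨⟨Or.inl rfl, Or.inr hu⟩, hvu⟩
    · exact ⟨⟨Or.inr hu, Or.inl rfl⟩, hvu.symm⟩

theorem card_edgesIn_le_erase_add [DecidableEq V] (U : Finset V) (v : V) :
    #(edgesIn G U) ≤ #(edgesIn G (U.erase v)) + #(neighborsIn G (U.erase v) v) :=
  calc #(edgesIn G U)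
      ≤ #(edgesIn G (insert v (U.erase v))) :=
        card_le_card (edgesIn_mono (insert_erase_subset v U))
    _ ≤ #(edgesIn G (U.erase v)) + #((neighborsIn G (U.erase v) v).image (s(v, ·))) := by
        rw [edgesIn_insert]
        exact card_union_le _ _
    _ ≤ #(edgesIn G (U.erase v)) + #(neighborsIn G (U.erase v) v) := by
        gcongr
        exact card_image_le

theorem neighborsIn_erase_self [DecidableEq V] :
    neighborsIn G (U.erase v) v = neighborsIn G U v := by
  rw [neighborsIn, filter_erase, erase_eq_of_notMem (by simp), neighborsIn]

theorem card_neighborsIn_lt (hv : v ∈ U) : #(neighborsIn G U v) < #U :=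
  card_lt_card (filter_ssubset.2 ⟨v, hv, G.irrefl⟩)

theorem card_edgesIn_top [DecidableEq V] (U : Finset V) : #(edgesIn ⊤ U) = (#U).choose 2 := by
  rw [← Sym2.card_image_offDiag]
  congr 1
  ext ⟨x, y⟩
  simp only [mem_edgesIn, SimpleGraph.top_adj, mem_image, mem_offDiag, Prod.exists,
    Function.uncurry_apply_pair, Sym2.eq_iff]
  grind

theorem card_edgesIn_add_choose_two_le (h : W ⊆ U) :
    #(edgesIn G U) + (#W).choose 2 ≤ #(edgesIn G W) + (#U).choose 2 := by
  classical
  have hnew : edgesIn G U \ edgesIn G W ⊆ edgesIn ⊤ U \ edgesIn ⊤ W := by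
    rintro ⟨x, y⟩ hxy
    simp only [mem_sdiff, mem_edgesIn, SimpleGraph.top_adj] at hxy ⊢
    exact ⟨⟨hxy.1.1, hxy.1.2.ne⟩, fun hW ↦ hxy.2 ⟨hW.1, hxy.1.2⟩⟩
  have hG := card_sdiff_add_card_eq_card (edgesIn_mono (G := G) h)
  have htop := card_sdiff_add_card_eq_card (edgesIn_mono (G := ⊤) h)
  rw [card_edgesIn_top, card_edgesIn_top] at htop
  have := card_le_card hnew
  omega

theorem card_edgesIn_le_choose_two (U : Finset V) : #(edgesIn G U) ≤ (#U).choose 2 := by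
  simpa [edgesIn] using card_edgesIn_add_choose_two_le (G := G) (empty_subset U)

variable [DecidableEq κ] (G) (C : Sym2 V → κ)

/-- The colors that `C` uses on the edges of `G[U]`; their number is `c(G[U])`. -/
def colorsIn (U : Finset V) : Finset κ := (edgesIn G U).image C

variable {G C} {c : κ}

theorem color_mem_colorsIn (hx : x ∈ U) (hy : y ∈ U) (h : G.Adj x y) :
    C s(x, y) ∈ colorsIn G C U :=
  mem_image_of_mem C (mem_edgesIn.2 ⟨⟨hx, hy⟩, h⟩)

theorem exists_adj_of_mem_colorsIn (h : c ∈ colorsIn G C U) :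
    ∃ x ∈ U, ∃ y ∈ U, G.Adj x y ∧ C s(x, y) = c := by
  obtain ⟨⟨x, y⟩, he, rfl⟩ := mem_image.1 h
  obtain ⟨⟨hx, hy⟩, hxy⟩ := mem_edgesIn.1 he
  exact ⟨x, hx, y, hy, hxy, rfl⟩

theorem card_colorsIn_add_card_edgesIn_le (C : Sym2 V → κ) (h : W ⊆ U) :
    #(colorsIn G C U) + #(edgesIn G W) ≤ #(colorsIn G C W) + #(edgesIn G U) := by
  classical
  have hunion : colorsIn G C U = colorsIn G C W ∪ (edgesIn G U \ edgesIn G W).image C := by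
    rw [colorsIn, colorsIn, ← image_union, union_sdiff_of_subset (edgesIn_mono h)]
  have hcolors : #(colorsIn G C U) ≤ #(colorsIn G C W) + #(edgesIn G U \ edgesIn G W) :=
    hunion ▸ (card_union_le _ _).trans (Nat.add_le_add_left card_image_le _)
  have hedges := card_sdiff_add_card_eq_card (edgesIn_mono (G := G) h)
  omega

theorem card_edgesIn_add_card_colorsIn_le (C : Sym2 V → κ) (h : W ⊆ U) :
    #(edgesIn G U) + #(colorsIn G C U) + 2 * (#W).choose 2
      ≤ #(edgesIn G W) + #(colorsIn G C W) + 2 * (#U).choose 2 := by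
  have hedges := card_edgesIn_add_choose_two_le (G := G) h
  have hcolors := card_colorsIn_add_card_edgesIn_le (G := G) C h
  omega

variable [Fintype V]

theorem coe_edgesIn_univ : (edgesIn G univ : Set (Sym2 V)) = G.edgeSet := by
  simp [edgesIn]

theorem natCard_edgeSet : Nat.card G.edgeSet = #(edgesIn G univ) := by
  rw [← coe_edgesIn_univ, Nat.card_coe_set_eq, Set.ncard_coe_finset]

theorem natCard_image_edgeSet (C : Sym2 V → κ) :
    Nat.card (C '' G.edgeSet) = #(colorsIn G C univ) := by
  rw [← coe_edgesIn_univ, ← coe_image, Nat.card_coe_set_eq, Set.ncard_coe_finset, colorsIn]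

end EdgesAndColors

section SaturatedColors

variable {V κ : Type*} [DecidableEq V] [DecidableEq κ]
variable (G : SimpleGraph V) [DecidableRel G.Adj] (C : Sym2 V → κ) (U : Finset V)

/-- The colors of `G[U]` that disappear when `v` is deleted, that is, all of whose edges contain
`v`: the colors *saturated* by `v`. Their number is the saturated degree `dˢ(v)`. -/
def saturatedColors (v : V) : Finset κ := colorsIn G C U \ colorsIn G C (U.erase v)

/-- The neighbors of `v` in `U` along edges whose color is saturated by `v`. -/
def saturatedNeighbors (v : V) : Finset V :=
  {u ∈ neighborsIn G U v | C s(v, u) ∈ saturatedColors G C U v}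

variable {G C U} {u v w x y : V}

theorem mem_saturatedNeighbors :
    u ∈ saturatedNeighbors G C U v ↔
      (u ∈ U ∧ G.Adj v u) ∧ C s(v, u) ∈ saturatedColors G C U v := by
  rw [saturatedNeighbors, mem_filter, mem_neighborsIn]

theorem saturatedNeighbors_subset_neighborsIn :
    saturatedNeighbors G C U v ⊆ neighborsIn G U v := filter_subset _ _

theorem eq_or_eq_of_color_mem_saturatedColors (h : C s(x, y) ∈ saturatedColors G C U v)
    (hx : x ∈ U) (hy : y ∈ U) (hxy : G.Adj x y) : v = x ∨ v = y := by
  by_contra! hne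
  exact (mem_sdiff.1 h).2
    (color_mem_colorsIn (mem_erase.2 ⟨hne.1.symm, hx⟩) (mem_erase.2 ⟨hne.2.symm, hy⟩) hxy)

theorem notMem_colorsIn_of_mem_saturatedColors {c : κ} {S : Finset V}
    (hc : c ∈ saturatedColors G C U v) (hS : S ⊆ U) (hv : v ∉ S) : c ∉ colorsIn G C S := by
  intro hcS
  obtain ⟨x, hx, y, hy, hxy, rfl⟩ := exists_adj_of_mem_colorsIn hcS
  rcases eq_or_eq_of_color_mem_saturatedColors hc (hS hx) (hS hy) hxy with rfl | rfl
  · exact hv hx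
  · exact hv hy

theorem image_saturatedNeighbors :
    (saturatedNeighbors G C U v).image (fun u ↦ C s(v, u)) = saturatedColors G C U v := by
  ext c
  rw [mem_image]
  constructor
  · rintro ⟨u, hu, rfl⟩
    exact (mem_saturatedNeighbors.1 hu).2
  · intro hc
    obtain ⟨x, hx, y, hy, hxy, rfl⟩ := exists_adj_of_mem_colorsIn (mem_sdiff.1 hc).1
    rcases eq_or_eq_of_color_mem_saturatedColors hc hx hy hxy with rfl | rfl
    · exact ⟨y, mem_saturatedNeighbors.2 ⟨⟨hy, hxy⟩, hc⟩, rfl⟩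
    · rw [Sym2.eq_swap] at hc ⊢
      exact ⟨x, mem_saturatedNeighbors.2 ⟨⟨hx, hxy.symm⟩, hc⟩, rfl⟩

theorem card_edgesIn_add_card_colorsIn_le_erase (U : Finset V) (v : V) :
    #(edgesIn G U) + #(colorsIn G C U) ≤ #(edgesIn G (U.erase v)) + #(colorsIn G C (U.erase v))
      + (#(neighborsIn G U v) + #(saturatedColors G C U v)) := by
  have hedges := card_edgesIn_le_erase_add (G := G) U v
  have hcolors := card_le_card_sdiff_add_card (s := colorsIn G C U) (t := colorsIn G C (U.erase v))
  rw [neighborsIn_erase_self] at hedges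
  rw [saturatedColors]
  omega

variable (G C U v) in
theorem exists_subset_saturatedNeighbors :
    ∃ D ⊆ saturatedNeighbors G C U v, Set.InjOn (fun u ↦ C s(v, u)) D ∧
      D.image (fun u ↦ C s(v, u)) = saturatedColors G C U v := by
  obtain ⟨D, hD, hinj, himage⟩ := exists_subset_injOn_image_eq_of_surjOn
    (saturatedNeighbors G C U v : Set V) (saturatedColors G C U v) (f := fun u ↦ C s(v, u)) (by
      rw [← image_saturatedNeighbors, coe_image]
      exact Set.surjOn_image _ _)
  exact ⟨D, mod_cast hD, hinj, himage⟩

variable (G C U) in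
/-- A choice of one neighbor of `v` in `U` for each color saturated by `v`: the out-neighbors of `v`
in a digraph whose edges at `v` have pairwise distinct saturated colors. -/
noncomputable def representatives (v : V) : Finset V :=
  (exists_subset_saturatedNeighbors G C U v).choose

variable (G C U) in
/-- The neighbors of `v` along edges of a color saturated by `v` that were not chosen as the
representative of that color. -/
noncomputable def surplusNeighbors (v : V) : Finset V :=
  saturatedNeighbors G C U v \ representatives G C U v

theorem representatives_subset : representatives G C U v ⊆ saturatedNeighbors G C U v :=
  (exists_subset_saturatedNeighbors G C U v).choose_spec.1

theorem injOn_color_representatives :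
    Set.InjOn (fun u ↦ C s(v, u)) (representatives G C U v) :=
  (exists_subset_saturatedNeighbors G C U v).choose_spec.2.1

theorem image_color_representatives :
    (representatives G C U v).image (fun u ↦ C s(v, u)) = saturatedColors G C U v :=
  (exists_subset_saturatedNeighbors G C U v).choose_spec.2.2

theorem card_representatives :
    #(representatives G C U v) = #(saturatedColors G C U v) := by
  rw [← image_color_representatives, card_image_of_injOn injOn_color_representatives]

theorem adj_of_mem_representatives (h : u ∈ representatives G C U v) : G.Adj v u :=
  (mem_saturatedNeighbors.1 (representatives_subset h)).1.2

theorem color_mem_of_mem_representatives (h : u ∈ representatives G C U v) :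
    C s(v, u) ∈ saturatedColors G C U v :=
  (mem_saturatedNeighbors.1 (representatives_subset h)).2

theorem representatives_subset_self : representatives G C U v ⊆ U :=
  representatives_subset.trans (saturatedNeighbors_subset_neighborsIn.trans (filter_subset _ _))

end SaturatedColors

section Surplus

variable {V κ : Type*} [DecidableEq V] [DecidableEq κ]
variable (G : SimpleGraph V) [DecidableRel G.Adj] (C : Sym2 V → κ) (U : Finset V)

/-- The edge `uv` of `G[U]` has a color saturated by `u` but not by `v`. Orienting such edges from
`u` to `v` gives the digraph in which surplus neighbors are double counted. -/
abbrev IsOneSided (u v : V) : Prop :=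
  v ∈ saturatedNeighbors G C U u ∧ u ∉ saturatedNeighbors G C U v

variable {G C U} {u v w : V}

theorem isOneSided_of_color_eq (hu : u ∈ U) (hv : v ∈ saturatedNeighbors G C U u)
    (hw : w ∈ saturatedNeighbors G C U u) (hvw : v ≠ w) (hcolor : C s(u, v) = C s(u, w)) :
    IsOneSided G C U u v := by
  refine ⟨hv, fun huv ↦ ?_⟩
  obtain ⟨⟨hwU, huw⟩, -⟩ := mem_saturatedNeighbors.1 hw
  have hsat := (mem_saturatedNeighbors.1 huv).2
  rw [Sym2.eq_swap, hcolor] at hsat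
  rcases eq_or_eq_of_color_mem_saturatedColors hsat hu hwU huw with rfl | rfl
  · exact G.irrefl (mem_saturatedNeighbors.1 hv).1.2
  · exact hvw rfl

theorem exists_representative_of_mem_surplusNeighbors (hv : v ∈ surplusNeighbors G C U u) :
    ∃ w ∈ representatives G C U u, v ≠ w ∧ C s(u, v) = C s(u, w) := by
  obtain ⟨hsat, hrep⟩ := mem_sdiff.1 hv
  have hcolor := (mem_saturatedNeighbors.1 hsat).2
  rw [← image_color_representatives] at hcolor
  obtain ⟨w, hw, hwv⟩ := mem_image.1 hcolor
  exact ⟨w, hw, fun h ↦ hrep (h ▸ hw), hwv.symm⟩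

theorem surplusNeighbors_subset_isOneSided (hu : u ∈ U) :
    surplusNeighbors G C U u ⊆ U.bipartiteAbove (IsOneSided G C U) u := by
  intro v hv
  obtain ⟨w, hw, hvw, hcolor⟩ := exists_representative_of_mem_surplusNeighbors hv
  have hsat := (mem_sdiff.1 hv).1
  exact (mem_bipartiteAbove _).2 ⟨(mem_saturatedNeighbors.1 hsat).1.1,
    isOneSided_of_color_eq hu hsat (representatives_subset hw) hvw hcolor⟩

theorem card_surplusNeighbors_lt (hu : u ∈ U) (h : (surplusNeighbors G C U u).Nonempty) :
    #(surplusNeighbors G C U u) < #(U.bipartiteAbove (IsOneSided G C U) u) := by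
  obtain ⟨v, hv⟩ := h
  obtain ⟨w, hw, hvw, hcolor⟩ := exists_representative_of_mem_surplusNeighbors hv
  have hwR : w ∈ U.bipartiteAbove (IsOneSided G C U) u :=
    (mem_bipartiteAbove _).2 ⟨representatives_subset_self hw, isOneSided_of_color_eq hu
      (representatives_subset hw) (mem_sdiff.1 hv).1 hvw.symm hcolor.symm⟩
  exact card_lt_card ((ssubset_iff_of_subset (surplusNeighbors_subset_isOneSided hu)).2
    ⟨w, hwR, fun hw' ↦ (mem_sdiff.1 hw').2 hw⟩)

theorem card_saturatedColors_add_card_surplusNeighbors_add_le :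
    #(saturatedColors G C U v) + #(surplusNeighbors G C U v)
      + #(U.bipartiteBelow (IsOneSided G C U) v) ≤ #(neighborsIn G U v) := by
  have hsat : #(surplusNeighbors G C U v) + #(saturatedColors G C U v)
      = #(saturatedNeighbors G C U v) := by
    rw [← card_representatives]
    exact card_sdiff_add_card_eq_card representatives_subset
  have hdisj : Disjoint (saturatedNeighbors G C U v) (U.bipartiteBelow (IsOneSided G C U) v) :=
    disjoint_left.2 fun u hu hu' ↦ ((mem_bipartiteBelow _).1 hu').2.2 hu
  have hbelow : U.bipartiteBelow (IsOneSided G C U) v ⊆ neighborsIn G U v := by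
    intro u hu
    obtain ⟨huU, huv, -⟩ := (mem_bipartiteBelow _).1 hu
    exact mem_neighborsIn.2 ⟨huU, (mem_saturatedNeighbors.1 huv).1.2.symm⟩
  have hunion : #(saturatedNeighbors G C U v) + #(U.bipartiteBelow (IsOneSided G C U) v)
      ≤ #(neighborsIn G U v) := by
    rw [← card_union_of_disjoint hdisj]
    exact card_le_card (union_subset saturatedNeighbors_subset_neighborsIn hbelow)
  omega

-- Each surplus edge is one-sided, so it is counted in the degrees of both of its ends beyond the
-- saturated colors there.
theorem sum_surplusNeighbors_eq_zero_or_lt :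
    ∑ v ∈ U, #(surplusNeighbors G C U v) = 0 ∨
      ∑ v ∈ U, #(saturatedColors G C U v) + 2 * ∑ v ∈ U, #(surplusNeighbors G C U v)
        < ∑ v ∈ U, #(neighborsIn G U v) := by
  refine or_iff_not_imp_left.2 fun hne ↦ ?_
  obtain ⟨u, hu, hucard⟩ := exists_ne_zero_of_sum_ne_zero hne
  have hout : ∑ v ∈ U, #(surplusNeighbors G C U v)
      < ∑ v ∈ U, #(U.bipartiteAbove (IsOneSided G C U) v) :=
    sum_lt_sum (fun v hv ↦ card_le_card (surplusNeighbors_subset_isOneSided hv))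
      ⟨u, hu, card_surplusNeighbors_lt hu (card_ne_zero.1 hucard)⟩
  have hcount := sum_card_bipartiteAbove_eq_sum_card_bipartiteBelow (s := U) (t := U)
    (IsOneSided G C U)
  have hdeg := sum_le_sum fun v (_ : v ∈ U) ↦
    card_saturatedColors_add_card_surplusNeighbors_add_le (G := G) (C := C) (U := U) (v := v)
  rw [sum_add_distrib, sum_add_distrib] at hdeg
  omega

theorem sum_surplusNeighbors_eq_zero_or_lt_of_degree {p : ℕ}
    (hdeg : ∀ v ∈ U, 2 * #U ≤ #(neighborsIn G U v) + #(saturatedColors G C U v) + p + 1) :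
    ∑ v ∈ U, #(surplusNeighbors G C U v) = 0 ∨
      2 * ∑ v ∈ U, #(surplusNeighbors G C U v) + #U < #U * p := by
  refine sum_surplusNeighbors_eq_zero_or_lt.imp_right fun hlt ↦ ?_
  have hlarge := sum_le_sum hdeg
  have hsmall : ∑ v ∈ U, (#(neighborsIn G U v) + 1) ≤ ∑ _v ∈ U, #U :=
    sum_le_sum fun v hv ↦ card_neighborsIn_lt hv
  simp only [sum_add_distrib, sum_const, smul_eq_mul, mul_one] at hlarge hsmall
  linarith

end Surplus

section RainbowClique

variable {V : Type*} {G : SimpleGraph V} {C : Sym2 V → ℕ} {S T U : Finset V} {v w x : V}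

theorem isRainbowClique_singleton (G : SimpleGraph V) (C : Sym2 V → ℕ) (v : V) :
    IsRainbowClique G C {v} := by
  simp [IsRainbowClique]

variable [DecidableRel G.Adj]

theorem isRainbowClique_iff :
    IsRainbowClique G C S ↔ G.IsClique S ∧ Set.InjOn C (edgesIn G S) := by
  constructor
  · rintro ⟨hadj, hinj⟩
    refine ⟨fun u hu v hv ↦ hadj u hu v hv, ?_⟩
    rintro ⟨u, v⟩ he ⟨x, y⟩ hf hC
    obtain ⟨⟨hu, hv⟩, huv⟩ := mem_edgesIn.1 he
    obtain ⟨⟨hx, hy⟩, hxy⟩ := mem_edgesIn.1 hf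
    exact hinj u hu v hv x hx y hy huv.ne hxy.ne hC
  · rintro ⟨hclique, hinj⟩
    refine ⟨fun u hu v hv ↦ hclique hu hv, fun u hu v hv x hx y hy huv hxy hC ↦ ?_⟩
    exact hinj (mem_edgesIn.2 ⟨⟨hu, hv⟩, hclique hu hv huv⟩)
      (mem_edgesIn.2 ⟨⟨hx, hy⟩, hclique hx hy hxy⟩) hC

theorem isRainbowClique_of_le (h : 2 * (#U).choose 2 ≤ #(edgesIn G U) + #(colorsIn G C U)) :
    IsRainbowClique G C U := by
  classical
  have hcolors : #(colorsIn G C U) ≤ #(edgesIn G U) := card_image_le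
  have hedges := card_edgesIn_le_choose_two (G := G) U
  have htop : edgesIn G U = edgesIn ⊤ U := by
    refine eq_of_subset_of_card_le ?_ (by rw [card_edgesIn_top]; omega)
    rintro ⟨x, y⟩ hxy
    rw [mem_edgesIn] at hxy ⊢
    exact ⟨hxy.1, hxy.2.ne⟩
  refine isRainbowClique_iff.2 ⟨fun x hx y hy hxy ↦ ?_, card_image_iff.1 ?_⟩
  · have : s(x, y) ∈ edgesIn ⊤ U := mem_edgesIn.2 ⟨⟨hx, hy⟩, hxy⟩
    exact (mem_edgesIn.1 (htop ▸ this)).2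
  · change #(colorsIn G C U) = #(edgesIn G U)
    omega

variable [DecidableEq V]

protected theorem IsRainbowClique.insert (hS : IsRainbowClique G C S) (hadj : ∀ u ∈ S, G.Adj v u)
    (hinj : Set.InjOn (fun u ↦ C s(v, u)) S) (hnew : ∀ u ∈ S, C s(v, u) ∉ colorsIn G C S) :
    IsRainbowClique G C (insert v S) := by
  rw [isRainbowClique_iff] at hS ⊢
  refine ⟨?_, ?_⟩
  · rw [coe_insert]
    exact hS.1.insert fun u hu _ ↦ hadj u hu
  · have hstar : ∀ e ∈ (neighborsIn G S v).image (s(v, ·)), ∃ u ∈ S, s(v, u) = e := fun e he ↦ by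
      obtain ⟨u, hu, rfl⟩ := mem_image.1 he
      exact ⟨u, (mem_neighborsIn.1 hu).1, rfl⟩
    intro e he f hf hef
    rw [edgesIn_insert, mem_coe, mem_union] at he hf
    rcases he with he | he <;> rcases hf with hf | hf
    · exact hS.2 he hf hef
    · obtain ⟨u, hu, rfl⟩ := hstar f hf
      exact (hnew u hu (hef ▸ mem_image_of_mem C he)).elim
    · obtain ⟨u, hu, rfl⟩ := hstar e he
      exact (hnew u hu (hef ▸ mem_image_of_mem C hf)).elim
    · obtain ⟨u, hu, rfl⟩ := hstar e he
      obtain ⟨u', hu', rfl⟩ := hstar f hf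
      rw [hinj hu hu' hef]

theorem IsRainbowClique.insert_of_subset_representatives (hS : IsRainbowClique G C S)
    (hrep : S ⊆ representatives G C U v) : IsRainbowClique G C (insert v S) := by
  have hadj : ∀ u ∈ S, G.Adj v u := fun u hu ↦ adj_of_mem_representatives (hrep hu)
  exact hS.insert hadj (injOn_color_representatives.mono (mod_cast hrep)) fun u hu ↦
    notMem_colorsIn_of_mem_saturatedColors (color_mem_of_mem_representatives (hrep hu))
      (hrep.trans representatives_subset_self) fun hv ↦ G.irrefl (hadj v hv)

-- If every color inside `insert w T` is saturated by a vertex of `T`, then the single color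
-- `C s(v, w)` that is not saturated by `v` cannot occur there.
theorem IsRainbowClique.insert_of_not_saturated (hT : IsRainbowClique G C (insert w T))
    (hrep : T ⊆ representatives G C U v) (hv : v ∈ U) (hw : w ∈ U) (hvw : G.Adj v w)
    (hcolor : C s(v, w) ∉ saturatedColors G C U v)
    (hsat : ∀ c ∈ colorsIn G C (insert w T), ∃ t ∈ T, c ∈ saturatedColors G C U t) :
    IsRainbowClique G C (insert v (insert w T)) := by
  have hadj : ∀ u ∈ insert w T, G.Adj v u :=
    forall_mem_insert _ _ _ |>.2 ⟨hvw, fun u hu ↦ adj_of_mem_representatives (hrep hu)⟩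
  have hvT : v ∉ insert w T := fun hv ↦ G.irrefl (hadj v hv)
  have hTsat : ∀ u ∈ T, C s(v, u) ∈ saturatedColors G C U v :=
    fun u hu ↦ color_mem_of_mem_representatives (hrep hu)
  have hwT : w ∉ T := fun h ↦ hcolor (hTsat w h)
  refine hT.insert hadj ?_ ?_
  · rw [coe_insert, Set.injOn_insert (mod_cast hwT)]
    refine ⟨injOn_color_representatives.mono (mod_cast hrep), ?_⟩
    rintro ⟨u, hu, huw⟩
    exact hcolor (huw ▸ hTsat u hu)
  · refine forall_mem_insert _ _ _ |>.2 ⟨fun hcw ↦ ?_, fun u hu ↦ ?_⟩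
    · obtain ⟨t, ht, htsat⟩ := hsat _ hcw
      rcases eq_or_eq_of_color_mem_saturatedColors htsat hv hw hvw with rfl | rfl
      · exact hvT (mem_insert_of_mem ht)
      · exact hwT ht
    · exact notMem_colorsIn_of_mem_saturatedColors (hTsat u hu)
        (insert_subset hw (hrep.trans representatives_subset_self)) hvT

theorem exists_mem_saturatedColors_of_pairwise {l : List V}
    (hpair : l.Pairwise fun a b ↦ b ∈ representatives G C U a)
    (hw : ∀ t ∈ l, w ∈ representatives G C U t) :
    ∀ c ∈ colorsIn G C (insert w l.toFinset), ∃ t ∈ l.toFinset, c ∈ saturatedColors G C U t := by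
  intro c hc
  obtain ⟨x, hx, y, hy, hxy, rfl⟩ := exists_adj_of_mem_colorsIn hc
  simp only [mem_insert, List.mem_toFinset] at hx hy ⊢
  have htotal : x ∈ l ∧ y ∈ representatives G C U x ∨ y ∈ l ∧ x ∈ representatives G C U y := by
    rcases hx with rfl | hx <;> rcases hy with rfl | hy
    · exact (G.irrefl hxy).elim
    · exact Or.inr ⟨hy, hw y hy⟩
    · exact Or.inl ⟨hx, hw x hx⟩
    · have : Std.Symm fun a b ↦ b ∈ representatives G C U a ∨ a ∈ representatives G C U b :=
        ⟨fun _ _ ↦ Or.symm⟩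
      have hsymm : l.Pairwise fun a b ↦
          b ∈ representatives G C U a ∨ a ∈ representatives G C U b := hpair.imp Or.inl
      exact (hsymm.forall hx hy hxy.ne).imp (⟨hx, ·⟩) (⟨hy, ·⟩)
  rcases htotal with ⟨hx, hyx⟩ | ⟨hy, hxy⟩
  · exact ⟨x, hx, color_mem_of_mem_representatives hyx⟩
  · exact ⟨y, hy, Sym2.eq_swap ▸ color_mem_of_mem_representatives hxy⟩

theorem isRainbowClique_insert_toFinset {l : List V} (hw : w ∈ U) (hl : ∀ a ∈ l, a ∈ U)
    (hpair : (l ++ [x]).Pairwise fun a b ↦ b ∈ representatives G C U a)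
    (hone : (l ++ [x]).Pairwise fun a b ↦ w ∈ representatives G C U a ∨ w ∈ representatives G C U b)
    (hadj : ∀ a ∈ l ++ [x], G.Adj a w) (hsurplus : ∀ a ∈ l, w ∉ surplusNeighbors G C U a) :
    IsRainbowClique G C (insert w (l ++ [x]).toFinset) := by
  induction l with
  | nil =>
    have hxw : G.Adj x w := hadj x (by simp)
    have hcolors : colorsIn G C {x} = ∅ := by simp [colorsIn, edgesIn]
    exact (isRainbowClique_singleton G C x).insert (by simpa using hxw.symm) (by simp)
      (by simp [hcolors])
  | cons a l ih =>
    rw [List.cons_append, List.pairwise_cons] at hpair hone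
    rw [List.cons_append, List.forall_mem_cons] at hadj
    rw [List.forall_mem_cons] at hl hsurplus
    have hclique := ih hl.2 hpair.2 hone.2 hadj.2 hsurplus.2
    have hrep : (l ++ [x]).toFinset ⊆ representatives G C U a :=
      fun b hb ↦ hpair.1 b (List.mem_toFinset.1 hb)
    rw [List.cons_append, List.toFinset_cons, Finset.insert_comm]
    by_cases hwa : w ∈ representatives G C U a
    · exact hclique.insert_of_subset_representatives (insert_subset hwa hrep)
    · refine hclique.insert_of_not_saturated hrep hl.1 hw hadj.1 (fun hcolor ↦ ?_) ?_
      · exact hsurplus.1 (mem_sdiff.2 ⟨mem_saturatedNeighbors.2 ⟨⟨hw, hadj.1⟩, hcolor⟩, hwa⟩)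
      · exact exists_mem_saturatedColors_of_pairwise hpair.2
          fun t ht ↦ (hone.1 t ht).resolve_left hwa

theorem card_insert_toFinset {l : List V}
    (hpair : l.Pairwise fun a b ↦ b ∈ representatives G C U a) (hadj : ∀ a ∈ l, G.Adj a w) :
    #(insert w l.toFinset) = l.length + 1 := by
  have hnodup : l.Nodup := hpair.imp fun h ↦ (adj_of_mem_representatives h).ne
  rw [card_insert_of_notMem, List.toFinset_card_of_nodup hnodup]
  exact fun hw ↦ G.irrefl (hadj w (List.mem_toFinset.1 hw))

end RainbowClique

section RepresentativeDigraph

variable {V : Type*} [DecidableEq V] {G : SimpleGraph V} [DecidableRel G.Adj] {C : Sym2 V → ℕ}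
  {U : Finset V} {v : V} {p r : ℕ}

theorem card_sdiff_representatives_add_card_sdiff_neighborsIn_le
    (hdeg : 2 * #U ≤ #(neighborsIn G U v) + #(saturatedColors G C U v) + p + 1) :
    #(U \ representatives G C U v) + #(U \ neighborsIn G U v) ≤ p + 1 := by
  have hrep := card_sdiff_add_card_eq_card (representatives_subset_self (G := G) (C := C) (U := U)
    (v := v))
  have hnbr := card_sdiff_add_card_eq_card (filter_subset (G.Adj v) U)
  rw [card_representatives] at hrep
  rw [← neighborsIn] at hnbr
  omega

theorem card_sdiff_representatives_le (hv : v ∈ U)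
    (hdeg : 2 * #U ≤ #(neighborsIn G U v) + #(saturatedColors G C U v) + p + 1) :
    #(U \ representatives G C U v) ≤ p := by
  have hsum := card_sdiff_representatives_add_card_sdiff_neighborsIn_le hdeg
  have hself : 0 < #(U \ neighborsIn G U v) :=
    card_pos.2 ⟨v, mem_sdiff.2 ⟨hv, fun h ↦ G.irrefl (mem_neighborsIn.1 h).2⟩⟩
  omega

theorem exists_card_filter_add_le_one {A B : Finset V} (hA : A ⊆ U)
    (hdeg : ∀ v ∈ U, 2 * #U ≤ #(neighborsIn G U v) + #(saturatedColors G C U v) + p + 1)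
    (hcount : ∑ b ∈ B, #(surplusNeighbors G C U b) + #A * (p + 1) < 2 * #U) :
    ∃ w ∈ U, #{a ∈ A | w ∉ representatives G C U a} + #{a ∈ A | w ∉ neighborsIn G U a}
      + #{b ∈ B | w ∈ surplusNeighbors G C U b} ≤ 1 := by
  have hA' : ∑ w ∈ U, (#{a ∈ A | w ∉ representatives G C U a} + #{a ∈ A | w ∉ neighborsIn G U a})
      ≤ #A * (p + 1) :=
    calc _ = ∑ a ∈ A, (#(U \ representatives G C U a) + #(U \ neighborsIn G U a)) := by
          simp only [sum_add_distrib, sdiff_eq_filter]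
          congr 1 <;> exact sum_card_bipartiteAbove_eq_sum_card_bipartiteBelow _
      _ ≤ #A * (p + 1) := sum_le_card_nsmul _ _ _ fun a ha ↦
          card_sdiff_representatives_add_card_sdiff_neighborsIn_le (hdeg a (hA ha))
  have hB : ∑ w ∈ U, #{b ∈ B | w ∈ surplusNeighbors G C U b}
      ≤ ∑ b ∈ B, #(surplusNeighbors G C U b) :=
    calc _ = ∑ b ∈ B, #{w ∈ U | w ∈ surplusNeighbors G C U b} :=
          sum_card_bipartiteAbove_eq_sum_card_bipartiteBelow _
      _ ≤ _ := sum_le_sum fun b _ ↦ card_le_card fun w hw ↦ (mem_filter.1 hw).2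
  have hlt : ∑ w ∈ U, (#{a ∈ A | w ∉ representatives G C U a} + #{a ∈ A | w ∉ neighborsIn G U a}
      + #{b ∈ B | w ∈ surplusNeighbors G C U b}) < ∑ _w ∈ U, 2 := by
    rw [sum_add_distrib, sum_const, smul_eq_mul]
    omega
  obtain ⟨w, hw, hlt⟩ := exists_lt_of_sum_lt hlt
  exact ⟨w, hw, Nat.le_of_lt_succ hlt⟩

-- A vertex of `A` not adjacent to `w`, or with `w` among its surplus neighbors, does not have `w`
-- as a representative either, hence is counted twice.
theorem exists_common_neighbor {A B : Finset V} (hA : A ⊆ U) (hB : B ⊆ A)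
    (hdeg : ∀ v ∈ U, 2 * #U ≤ #(neighborsIn G U v) + #(saturatedColors G C U v) + p + 1)
    (hcount : ∑ b ∈ B, #(surplusNeighbors G C U b) + #A * (p + 1) < 2 * #U) :
    ∃ w ∈ U, (∀ a ∈ A, G.Adj a w) ∧ (∀ b ∈ B, w ∉ surplusNeighbors G C U b) ∧
      ∀ a ∈ A, ∀ b ∈ A, a ≠ b → w ∈ representatives G C U a ∨ w ∈ representatives G C U b := by
  obtain ⟨w, hw, hle⟩ := exists_card_filter_add_le_one hA hdeg hcount
  have hrep {a : V} (ha : a ∈ A) (hwa : w ∉ representatives G C U a) :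
      0 < #{a ∈ A | w ∉ representatives G C U a} := card_pos.2 ⟨a, mem_filter.2 ⟨ha, hwa⟩⟩
  refine ⟨w, hw, fun a ha ↦ ?_, fun b hb hwb ↦ ?_, fun a ha b hb hab ↦ ?_⟩
  · by_contra hwa
    have hwa' : w ∉ neighborsIn G U a := fun h ↦ hwa (mem_neighborsIn.1 h).2
    have hnbr : 0 < #{a ∈ A | w ∉ neighborsIn G U a} := card_pos.2 ⟨a, mem_filter.2 ⟨ha, hwa'⟩⟩
    have := hrep ha fun h ↦ hwa (adj_of_mem_representatives h)
    omega
  · have hsurplus : 0 < #{b ∈ B | w ∈ surplusNeighbors G C U b} :=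
      card_pos.2 ⟨b, mem_filter.2 ⟨hb, hwb⟩⟩
    have := hrep (hB hb) (mem_sdiff.1 hwb).2
    omega
  · by_contra! hwab
    refine hab (card_le_one.1 (?_ : #{a ∈ A | w ∉ representatives G C U a} ≤ 1) a ?_ b ?_)
    · omega
    · exact mem_filter.2 ⟨ha, hwab.1⟩
    · exact mem_filter.2 ⟨hb, hwab.2⟩

theorem add_succ_mul_succ_lt_two_mul {n p r S F : ℕ} (hr : 2 ≤ r) (hn : r + 3 ≤ n)
    (hp : r * p < n) (hS : n * S ≤ r * F) (hF : F = 0 ∨ 2 * F + n < n * p) :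
    S + (r + 1) * (p + 1) < 2 * n := by
  have hS' : S = 0 ∨ 2 * S + r < r * p := by
    rcases hF with rfl | hF
    · left
      simpa [show n ≠ 0 by omega] using hS
    · right
      refine lt_of_mul_lt_mul_left (a := n) ?_ (Nat.zero_le _)
      nlinarith
  rcases hS' with rfl | hS'
  · rcases Nat.lt_or_ge p 2 with _ | _
    · interval_cases p <;> omega
    · nlinarith
  · nlinarith

theorem exists_isRainbowClique_of_degree (hr : 2 ≤ r) (hU : r + 3 ≤ #U) (hp : r * p < #U)
    (hdeg : ∀ v ∈ U, 2 * #U ≤ #(neighborsIn G U v) + #(saturatedColors G C U v) + p + 1) :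
    ∃ S ⊆ U, #S = r + 2 ∧ IsRainbowClique G C S := by
  obtain ⟨l, x, hx, hlen, hlU, hpair, hsum⟩ := exists_pairwise_list_sum_le
    (representatives G C U) (fun v ↦ #(surplusNeighbors G C U v)) p r hp
    fun v hv ↦ card_sdiff_representatives_le hv (hdeg v hv)
  have hnodup : (l ++ [x]).Nodup := hpair.imp fun h ↦ (adj_of_mem_representatives h).ne
  have hLU : (l ++ [x]).toFinset ⊆ U := by
    intro a ha
    rcases List.mem_append.1 (List.mem_toFinset.1 ha) with hal | hax
    · exact hlU a hal
    · exact List.mem_singleton.1 hax ▸ hx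
  have hcount : ∑ b ∈ l.toFinset, #(surplusNeighbors G C U b)
      + #(l ++ [x]).toFinset * (p + 1) < 2 * #U := by
    rw [List.sum_toFinset _ hnodup.of_append_left, List.toFinset_card_of_nodup hnodup,
      List.length_append, List.length_singleton, hlen]
    exact add_succ_mul_succ_lt_two_mul hr hU hp hsum
      (sum_surplusNeighbors_eq_zero_or_lt_of_degree hdeg)
  have hlL : l.toFinset ⊆ (l ++ [x]).toFinset := by
    simp
  obtain ⟨w, hw, hadj, hsurplus, hone⟩ := exists_common_neighbor hLU hlL hdeg hcount
  simp only [List.mem_toFinset] at hadj hsurplus hone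
  refine ⟨insert w (l ++ [x]).toFinset, insert_subset hw hLU, ?_, ?_⟩
  · rw [card_insert_toFinset hpair hadj, List.length_append, List.length_singleton, hlen]
  · exact isRainbowClique_insert_toFinset hw hlU hpair
      (hnodup.imp_of_mem fun ha hb hab ↦ hone _ ha _ hb hab) hadj hsurplus

end RepresentativeDigraph

section ExistsRainbowClique

variable {V : Type*} {G : SimpleGraph V} [DecidableRel G.Adj] {C : Sym2 V → ℕ} {U : Finset V}
  {r : ℕ}

theorem exists_isRainbowClique (hr : 2 ≤ r) (hU : r + 2 ≤ #U)
    (h : (#U).choose 2 + turanEdges #U r + 2 ≤ #(edgesIn G U) + #(colorsIn G C U)) :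
    ∃ S ⊆ U, #S = r + 2 ∧ IsRainbowClique G C S := by
  classical
  obtain ⟨n, hn⟩ : ∃ n, #U = n := ⟨_, rfl⟩
  rw [hn] at hU
  induction n, hU using Nat.le_induction generalizing U with
  | base =>
    refine ⟨U, Subset.rfl, hn, isRainbowClique_of_le ?_⟩
    rw [hn] at h ⊢
    have := turanEdges_add_two_add_two hr
    omega
  | succ n hrn ih =>
    by_cases hdeg : ∀ v ∈ U,
        2 * #U ≤ #(neighborsIn G U v) + #(saturatedColors G C U v) + n / r + 1
    · refine exists_isRainbowClique_of_degree hr (by omega) ?_ hdeg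
      have := Nat.mul_div_le n r
      omega
    · push Not at hdeg
      obtain ⟨v, hv, hlow⟩ := hdeg
      have hcard : #(U.erase v) = n := by rw [card_erase_of_mem hv, hn, Nat.add_sub_cancel]
      obtain ⟨S, hSU, hS⟩ := ih (U := U.erase v) (by
        have hturan := turanEdges_succ_add_div n r
        have herase := card_edgesIn_add_card_colorsIn_le_erase (G := G) (C := C) U v
        rw [hn] at h hlow
        rw [choose_two_succ] at h
        rw [hcard]
        omega) hcard
      exact ⟨S, hSU.trans (erase_subset v U), hS⟩

theorem exists_isRainbowClique_of_add_choose_two {N : ℕ} (hr : 2 ≤ r) (hN : r + 2 ≤ N)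
    (hU : N ≤ #U) (h : turanEdges N r + 2 + 2 * (#U).choose 2
      ≤ #(edgesIn G U) + #(colorsIn G C U) + N.choose 2) :
    ∃ S ⊆ U, #S = r + 2 ∧ IsRainbowClique G C S := by
  refine exists_isRainbowClique hr (hN.trans hU) ?_
  have := turanEdges_add_choose_two_le r hU
  omega

theorem exists_disjoint_isRainbowClique {N : ℕ} (hr : 2 ≤ r) (hN : r + 2 ≤ N) (m : ℕ)
    (hU : #U = N + (r + 2) * m)
    (h : turanEdges N r + 2 + 2 * (#U).choose 2
      ≤ #(edgesIn G U) + #(colorsIn G C U) + N.choose 2) :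
    ∃ S : Fin (m + 1) → Finset V, (∀ i, S i ⊆ U ∧ #(S i) = r + 2 ∧ IsRainbowClique G C (S i)) ∧
      Pairwise fun i j ↦ Disjoint (S i) (S j) := by
  classical
  induction m generalizing U with
  | zero =>
    obtain ⟨T, hT⟩ := exists_isRainbowClique_of_add_choose_two hr hN (by omega) h
    exact ⟨fun _ ↦ T, fun _ ↦ hT, Subsingleton.pairwise (α := Fin 1)⟩
  | succ m ih =>
    obtain ⟨T, hTU, hTcard, hT⟩ := exists_isRainbowClique_of_add_choose_two hr hN (by omega) h
    have hcard : #(U \ T) = N + (r + 2) * m := by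
      rw [card_sdiff_of_subset hTU, hTcard, hU, mul_add_one, ← add_assoc, Nat.add_sub_cancel]
    have hdelete := card_edgesIn_add_card_colorsIn_le (G := G) C (sdiff_subset : U \ T ⊆ U)
    obtain ⟨S, hS, hdisj⟩ := ih hcard (by omega)
    have hTS : ∀ i, Disjoint T (S i) := fun i ↦ disjoint_of_subset_right (hS i).1 disjoint_sdiff
    have hsymm : Std.Symm fun i j ↦ Disjoint ((Fin.cons T S : Fin (m + 2) → Finset V) i)
        ((Fin.cons T S : Fin (m + 2) → Finset V) j) := ⟨fun _ _ h ↦ h.symm⟩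
    refine ⟨Fin.cons T S, fun i ↦ ?_, pairwise_fin_succ_iff_of_isSymm.2 ⟨hTS, hdisj⟩⟩
    cases i using Fin.cases with
    | zero => exact ⟨hTU, hTcard, hT⟩
    | succ i => exact ⟨(hS i).1.trans sdiff_subset, (hS i).2⟩

end ExistsRainbowClique

/-- If `k ≥ 4`, `m ≥ 1`, `n ≥ km` and
`e(G) + c(G) ≥ C(n-k(m-1), 2) + t_{n-k(m-1),k-2} + 2 + k(m-1)(2n-1) - k²(m-1)²`,
then `G` contains `m` pairwise vertex-disjoint rainbow copies of `K_k`. -/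
theorem disjoint_rainbow_cliques_of_edges_add_colors {V : Type*} [Fintype V] (n k m : ℕ)
    (hk : 4 ≤ k) (hm : 1 ≤ m) (hV : Fintype.card V = n) (hn : k * m ≤ n)
    (G : SimpleGraph V) (C : Sym2 V → ℕ)
    (h : Nat.card G.edgeSet + Nat.card (C '' G.edgeSet)
      ≥ (n - k * (m - 1)).choose 2 + turanEdges (n - k * (m - 1)) (k - 2) + 2
        + (k * (m - 1) * (2 * n - 1) - k ^ 2 * (m - 1) ^ 2)) :
    ∃ S : Fin m → Finset V, (∀ i, (S i).card = k) ∧ (∀ i, IsRainbowClique G C (S i)) ∧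
      ∀ i j, i ≠ j → Disjoint (S i) (S j) := by
  classical
  obtain ⟨r, rfl⟩ := Nat.exists_eq_add_of_le' (show 2 ≤ k by omega)
  obtain ⟨m, rfl⟩ := Nat.exists_eq_add_of_le' hm
  obtain ⟨N, rfl⟩ : ∃ N, n = N + (r + 2) * m :=
    Nat.exists_eq_add_of_le' ((Nat.mul_le_mul_left _ m.le_succ).trans hn)
  have hN : r + 2 ≤ N := by
    rw [mul_add_one] at hn
    omega
  have hchoose := two_mul_choose_two_add N ((r + 2) * m)
  simp only [Nat.add_sub_cancel, natCard_edgeSet, natCard_image_edgeSet, ← mul_pow] at h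
  obtain ⟨S, hS, hdisj⟩ := exists_disjoint_isRainbowClique (G := G) (C := C) (U := univ)
    (by omega) hN m hV (by rw [card_univ, hV]; omega)
  exact ⟨S, fun i ↦ (hS i).2.1, fun i ↦ (hS i).2.2, fun i j hij ↦ hdisj hij⟩
end

section
/- For all m ≥ 2 and n ≥ 5m, there exists an edge coloring of the complete graph K_n with no m pairwise vertex-disjoint rainbow triangles such that e(G) + c(G) > ((n+1) choose 2) + 6m - 6. (This disproves the conjecture of L. Li and X. Li that every edge-colored graph on n ≥ 5m vertices with e(G) + c(G) ≥ ((n+1) choose 2) + 6m - 6 contains a proper mK_3.) -/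
/-!
Fix a set `A` of `m - 1` vertices. Give every edge that meets `A` a private color and color every
other edge by its smaller endpoint. A triangle avoiding `A` has two edges of the same color at its
least vertex, so every rainbow triangle meets `A` and at most `m - 1` of them are pairwise disjoint.
Already the edges between `A` and its complement and those from the complement to its last vertex
show `(m - 1) * (n - m + 1) + (n - m)` colors. For `n ≥ m + 8` this exceeds `n + 6 * m - 6`, which
is what is needed because `(n + 1).choose 2 = n + n.choose 2`.
-/

open Finset

lemma card_le_card_of_pairwise_disjoint_of_not_disjoint {ι α : Type*} [Fintype ι]
    {S : ι → Finset α} {A : Finset α} (hdisj : Pairwise fun i j ↦ Disjoint (S i) (S j))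
    (hmeet : ∀ i, ¬ Disjoint (S i) A) : Fintype.card ι ≤ #A := by
  classical
  calc
    Fintype.card ι ≤ #(univ.biUnion fun i ↦ S i ∩ A) :=
      card_le_card_biUnion
        (fun _ _ _ _ hij ↦ (hdisj hij).mono inter_subset_left inter_subset_left)
        fun i _ ↦ not_disjoint_iff_nonempty_inter.mp (hmeet i)
    _ ≤ #A := card_le_card <| biUnion_subset.mpr fun _ _ ↦ inter_subset_right

section HubColoring

variable {V : Type*} [LinearOrder V] {A : Finset V}

/-- The coloring in which every edge meeting the hub set `A` has a private color and every other
edge is colored by its smaller endpoint. Colors are elements of `Sym2 V`: the private color of an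
edge is the edge itself, and the color belonging to a vertex is the loop at that vertex. -/
def hubColoring (A : Finset V) (e : Sym2 V) : Sym2 V :=
  if ∃ a ∈ A, a ∈ e then e else Sym2.diag e.inf

lemma hubColoring_mk_of_mem {a : V} (ha : a ∈ A) (b : V) : hubColoring A s(a, b) = s(a, b) :=
  if_pos ⟨a, ha, Sym2.mem_mk_left a b⟩

lemma hubColoring_mk_of_notMem_of_le {a b : V} (ha : a ∉ A) (hb : b ∉ A) (hab : a ≤ b) :
    hubColoring A s(a, b) = Sym2.diag a := by
  have not_meets : ¬ ∃ c ∈ A, c ∈ s(a, b) := by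
    rintro ⟨c, hc, hmem⟩
    rcases Sym2.mem_iff.mp hmem with rfl | rfl
    exacts [ha hc, hb hc]
  rw [hubColoring, if_neg not_meets, Sym2.inf_mk, inf_eq_left.mpr hab]

lemma IsRainbowClique.not_disjoint_hub {G : SimpleGraph V} {φ : Sym2 V → ℕ} {S : Finset V}
    (hS : IsRainbowClique G (φ ∘ hubColoring A) S) (hcard : 3 ≤ #S) : ¬ Disjoint S A := by
  intro hdisj
  have notMem {v : V} (hv : v ∈ S) : v ∉ A := disjoint_left.mp hdisj hv
  have hne : S.Nonempty := card_pos.mp (by omega)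
  let a := S.min' hne
  have ha : a ∈ S := S.min'_mem hne
  obtain ⟨b, hb, c, hc, hbc⟩ : ∃ b ∈ S.erase a, ∃ c ∈ S.erase a, b ≠ c :=
    one_lt_card.mp (by rw [card_erase_of_mem ha]; omega)
  obtain ⟨hba, hb⟩ := mem_erase.mp hb
  obtain ⟨hca, hc⟩ := mem_erase.mp hc
  have same_color : hubColoring A s(a, b) = hubColoring A s(a, c) := by
    rw [hubColoring_mk_of_notMem_of_le (notMem ha) (notMem hb) (S.min'_le b hb),
      hubColoring_mk_of_notMem_of_le (notMem ha) (notMem hc) (S.min'_le c hc)]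
  have same_edge : s(a, b) = s(a, c) :=
    hS.2 a ha b hb a ha c hc hba.symm hca.symm (congrArg φ same_color)
  exact hbc (Sym2.congr_right.mp same_edge)

lemma mk_mem_hubColoring_image {a b : V} (ha : a ∈ A) (hb : b ∉ A) :
    s(a, b) ∈ hubColoring A '' (⊤ : SimpleGraph V).edgeSet :=
  ⟨s(a, b), ne_of_mem_of_not_mem ha hb, hubColoring_mk_of_mem ha b⟩

lemma diag_mem_hubColoring_image {v w : V} (hv : v ∉ A) (hw : w ∉ A) (hvw : v < w) :
    Sym2.diag v ∈ hubColoring A '' (⊤ : SimpleGraph V).edgeSet :=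
  ⟨s(v, w), hvw.ne, hubColoring_mk_of_notMem_of_le hv hw hvw.le⟩

lemma card_image_mk_product_compl [Fintype V] (A : Finset V) :
    #((A ×ˢ Aᶜ).image fun p ↦ s(p.1, p.2)) = #A * #Aᶜ := by
  rw [card_image_of_injOn, card_product]
  rintro ⟨a, b⟩ hab ⟨c, d⟩ hcd heq
  simp only [coe_product, Set.mem_prod, mem_coe, mem_compl] at hab hcd
  rcases Sym2.eq_iff.mp heq with ⟨rfl, rfl⟩ | ⟨rfl, rfl⟩
  · rfl
  · exact absurd hab.1 hcd.2

lemma card_mul_card_compl_add_card_compl_le_ncard_hubColoring_image [Fintype V] (A : Finset V) :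
    #A * #Aᶜ + #Aᶜ ≤ (hubColoring A '' (⊤ : SimpleGraph V).edgeSet).ncard + 1 := by
  obtain hempty | hne := Aᶜ.eq_empty_or_nonempty
  · simp [hempty]
  let w := Aᶜ.max' hne
  have hw : w ∈ Aᶜ := Aᶜ.max'_mem hne
  let crossEdges := (A ×ˢ Aᶜ).image fun p ↦ s(p.1, p.2)
  let loops := (Aᶜ.erase w).image Sym2.diag
  have card_loops : #loops + 1 = #Aᶜ := by
    rw [card_image_of_injective _ Sym2.diag_injective, card_erase_add_one hw]
  have disjoint_loops : Disjoint crossEdges loops := by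
    simp only [crossEdges, loops, disjoint_left, mem_image, mem_product, mem_compl]
    rintro _ ⟨⟨a, b⟩, ⟨ha, hb⟩, rfl⟩ ⟨v, -, hv⟩
    exact ne_of_mem_of_not_mem ha hb (Sym2.mk_isDiag_iff.mp (hv ▸ Sym2.diag_isDiag v))
  have subset_image :
      (↑(crossEdges ∪ loops) : Set (Sym2 V)) ⊆ hubColoring A '' (⊤ : SimpleGraph V).edgeSet := by
    intro color hcolor
    rcases mem_union.mp hcolor with hcross | hloop
    · obtain ⟨⟨a, b⟩, hab, rfl⟩ := mem_image.mp hcross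
      obtain ⟨ha, hb⟩ := mem_product.mp hab
      exact mk_mem_hubColoring_image ha (mem_compl.mp hb)
    · obtain ⟨v, hv, rfl⟩ := mem_image.mp hloop
      obtain ⟨hvw, hv⟩ := mem_erase.mp hv
      exact diag_mem_hubColoring_image (mem_compl.mp hv) (mem_compl.mp hw)
        ((Aᶜ.le_max' v hv).lt_of_ne hvw)
  calc
    #A * #Aᶜ + #Aᶜ = #(crossEdges ∪ loops) + 1 := by
      rw [card_union_of_disjoint disjoint_loops, card_image_mk_product_compl, add_assoc, card_loops]
    _ ≤ (hubColoring A '' (⊤ : SimpleGraph V).edgeSet).ncard + 1 := by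
      rw [← Set.ncard_coe_finset]
      exact Nat.add_le_add_right (Set.ncard_le_ncard subset_image) 1

end HubColoring

lemma natCard_edgeSet_top (V : Type*) [Fintype V] :
    Nat.card (⊤ : SimpleGraph V).edgeSet = (Fintype.card V).choose 2 := by
  classical
  rw [Nat.card_eq_fintype_card, ← SimpleGraph.edgeFinset_card,
    SimpleGraph.card_edgeFinset_top_eq_card_choose_two]

theorem exists_coloring_disproving_conjecture_general (m n : ℕ) (hm : 2 ≤ m) (hn : m + 8 ≤ n) :
    ∃ C : Sym2 (Fin n) → ℕ,
      (¬ ∃ S : Fin m → Finset (Fin n), (∀ i, (S i).card = 3) ∧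
          (∀ i, IsRainbowClique (⊤ : SimpleGraph (Fin n)) C (S i)) ∧
          ∀ i j, i ≠ j → Disjoint (S i) (S j)) ∧
      Nat.card (⊤ : SimpleGraph (Fin n)).edgeSet
          + Nat.card (C '' (⊤ : SimpleGraph (Fin n)).edgeSet)
        > (n + 1).choose 2 + 6 * m - 6 := by
  obtain ⟨A, -, hA⟩ : ∃ A ⊆ (univ : Finset (Fin n)), #A = m - 1 :=
    exists_subset_card_eq (by rw [card_fin]; omega)
  obtain ⟨φ, hφ⟩ := exists_injective_nat (Sym2 (Fin n))
  refine ⟨φ ∘ hubColoring A, ?_, ?_⟩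
  · rintro ⟨S, hcard, hrainbow, hdisj⟩
    have hle : Fintype.card (Fin m) ≤ #A :=
      card_le_card_of_pairwise_disjoint_of_not_disjoint hdisj
        fun i ↦ (hrainbow i).not_disjoint_hub (hcard i).ge
    rw [Fintype.card_fin] at hle
    omega
  · have hcolors := card_mul_card_compl_add_card_compl_le_ncard_hubColoring_image A
    have hcompl : #Aᶜ + #A = n := by rw [card_compl_add_card, Fintype.card_fin]
    have hproduct : #A * 9 ≤ #A * #Aᶜ := Nat.mul_le_mul_left _ (by omega)
    have hchoose : (n + 1).choose 2 = n + n.choose 2 := by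
      rw [Nat.choose_succ_succ' n 1, Nat.choose_one_right]
    rw [natCard_edgeSet_top, Fintype.card_fin, Set.image_comp, Nat.card_coe_set_eq,
      Set.ncard_image_of_injective _ hφ, hchoose]
    omega

/-- For all `m ≥ 2` and `n ≥ 5m` there is an edge coloring of `K_n` with no `m` pairwise
vertex-disjoint rainbow triangles and `e(G) + c(G) > C(n+1, 2) + 6m - 6`, disproving the
conjecture of L. Li and X. Li. -/
theorem exists_coloring_disproving_conjecture (m n : ℕ) (hm : 2 ≤ m) (hn : 5 * m ≤ n) :
    ∃ C : Sym2 (Fin n) → ℕ,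
      (¬ ∃ S : Fin m → Finset (Fin n), (∀ i, (S i).card = 3) ∧
          (∀ i, IsRainbowClique (⊤ : SimpleGraph (Fin n)) C (S i)) ∧
          ∀ i j, i ≠ j → Disjoint (S i) (S j)) ∧
      Nat.card (⊤ : SimpleGraph (Fin n)).edgeSet
          + Nat.card (C '' (⊤ : SimpleGraph (Fin n)).edgeSet)
        > (n + 1).choose 2 + 6 * m - 6 :=
  exists_coloring_disproving_conjecture_general m n hm (by omega)
end
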